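/- For every n ≥ 2, the toric ideal I_{K_{2,n}} of the complete bipartite graph K_{2,n} is generated in degree ≤ 4 (indeed generated by its homogeneous elements of total degrees 2 and 4), and is not generated in degree ≤ 3; consequently the Markov width satisfies μ(K_{2,n}) = 4. -/

import Mathlib

open MvPolynomial Finset

namespace BinaryGraphModels

variable {V : Type} [Fintype V] [DecidableEq V]

/-- The monomial map `φ_G` of the binary graph model: the variable `p_I` is sent to the
product over edges `{j,k}` of the variable `t^{jk}_{I(j)I(k)}` (encoded as the unordered pair
`{(j, I j), (k, I k)}`) times the product over isolated vertices `l` of `t^{l}_{I(l)}`. -/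
noncomputable def phi (G : SimpleGraph V) :
    MvPolynomial (V → Bool) ℂ →ₐ[ℂ] MvPolynomial (Sym2 (V × Bool) ⊕ (V × Bool)) ℂ := by
  letI : DecidableRel G.Adj := Classical.decRel _
  exact aeval fun I : V → Bool =>
    (∏ e ∈ G.edgeFinset,
      (X (Sum.inl (Sym2.map (fun v => (v, I v)) e)) :
        MvPolynomial (Sym2 (V × Bool) ⊕ (V × Bool)) ℂ)) *
    ∏ l ∈ univ.filter (fun l : V => ∀ k, ¬ G.Adj l k), X (Sum.inr (l, I l))

/-- The toric ideal `I_G` of the binary graph model of `G`. -/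
noncomputable def toricIdeal (G : SimpleGraph V) : Ideal (MvPolynomial (V → Bool) ℂ) :=
  RingHom.ker (phi G).toRingHom

/-- `I_G` is generated in degree at most `d`. -/
def GenInDegLE (G : SimpleGraph V) (d : ℕ) : Prop :=
  toricIdeal G =
    Ideal.span {f : MvPolynomial (V → Bool) ℂ | f ∈ toricIdeal G ∧ f.totalDegree ≤ d}

/-- The Markov width `μ(G)`: the least `d` such that `I_G` is generated in degree `≤ d`. -/
noncomputable def markovWidth (G : SimpleGraph V) : ℕ :=
  sInf {d : ℕ | GenInDegLE G d}

/-- `f` is a minimal generator of `I_G`, i.e. `f ∈ I_G` and `f ∉ 𝔪 · I_G` where `𝔪` is the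
irrelevant maximal ideal generated by all the variables. -/
def IsMinimalGenerator (G : SimpleGraph V) (f : MvPolynomial (V → Bool) ℂ) : Prop :=
  f ∈ toricIdeal G ∧
    f ∉ Ideal.span (Set.range (X : (V → Bool) → MvPolynomial (V → Bool) ℂ)) * toricIdeal G

/-- Two integer tables have the same `G`-marginals: equal two-way marginals along every edge
and equal one-way marginals at every isolated vertex. -/
def MarginalsEq (G : SimpleGraph V) (v₁ v₂ : (V → Bool) → ℤ) : Prop :=
  (∀ j k : V, G.Adj j k → ∀ a b : Bool,
    (∑ I : V → Bool, if I j = a ∧ I k = b then v₁ I else 0) =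
    (∑ I : V → Bool, if I j = a ∧ I k = b then v₂ I else 0)) ∧
  (∀ l : V, (∀ k, ¬ G.Adj l k) → ∀ a : Bool,
    (∑ I : V → Bool, if I l = a then v₁ I else 0) =
    (∑ I : V → Bool, if I l = a then v₂ I else 0))

/-- `B` is a Markov basis for `G`: any two nonnegative tables with the same `G`-marginals are
connected by a path of moves from `±B` staying nonnegative. -/
def IsMarkovBasis (G : SimpleGraph V) (B : Finset ((V → Bool) → ℤ)) : Prop :=
  ∀ v₁ v₂ : (V → Bool) → ℤ, (∀ I, 0 ≤ v₁ I) → (∀ I, 0 ≤ v₂ I) →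
    MarginalsEq G v₁ v₂ →
    ∃ L : List ((V → Bool) → ℤ),
      (∀ u ∈ L, u ∈ B ∨ -u ∈ B) ∧
      v₁ + L.sum = v₂ ∧
      ∀ n : ℕ, n ≤ L.length → ∀ I, 0 ≤ (v₁ + (L.take n).sum) I

/-- The binomial `p^{u⁺} - p^{u⁻}` associated to an integer table `u`. -/
noncomputable def moveBinomial (u : (V → Bool) → ℤ) : MvPolynomial (V → Bool) ℂ :=
  (∏ I : V → Bool, X I ^ (u I).toNat) - ∏ I : V → Bool, X I ^ (-u I).toNat

end BinaryGraphModels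

namespace BinaryGraphModels

/-- index strings of `K_{2,n}` -/
abbrev Idx (n : ℕ) := Fin 2 ⊕ Fin n → Bool

/-- the graph `K_{2,n}` -/
abbrev K2 (n : ℕ) := completeBipartiteGraph (Fin 2) (Fin n)

/-- the ideal generated by the quadrics and quartics of the toric ideal -/
noncomputable def J24 (n : ℕ) : Ideal (MvPolynomial (Idx n) ℂ) :=
  Ideal.span {f : MvPolynomial (Idx n) ℂ |
        f ∈ toricIdeal (K2 n) ∧ (f.IsHomogeneous 2 ∨ f.IsHomogeneous 4)}

/-- monomial of a multiset -/
noncomputable def mon {n : ℕ} (m : Multiset (Idx n)) : MvPolynomial (Idx n) ℂ := (m.map X).prod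

/-- the edge marginal of a string -/
def pr {n : ℕ} (i : Fin 2) (j : Fin n) (I : Idx n) : Bool × Bool := (I (Sum.inl i), I (Sum.inr j))

/-- the values of a string on a path -/
def tr {n : ℕ} (j : Fin n) (I : Idx n) : Bool × Bool × Bool :=
  (I (Sum.inl 0), I (Sum.inl 1), I (Sum.inr j))

/-- equality of marginals -/
def Marg {n : ℕ} (m m' : Multiset (Idx n)) : Prop := ∀ i j, m.map (pr i j) = m'.map (pr i j)

lemma phi_X (n : ℕ) (hn : 2 ≤ n) (I : Idx n) :
    phi (K2 n) (X I) = ∏ i : Fin 2, ∏ j : Fin n,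
      X (Sum.inl s((Sum.inl i, I (Sum.inl i)), (Sum.inr j, I (Sum.inr j)))) := by
  classical
  simp only [phi, aeval_X]
  rw [Finset.prod_eq_one (s := univ.filter _), mul_one, ← Finset.prod_product']
  · symm
    refine Finset.prod_bij (fun p _ => s(Sum.inl p.1, Sum.inr p.2)) ?_ ?_ ?_ ?_
    · intro p _
      simp
    · rintro ⟨a, b⟩ _ ⟨c, d⟩ _ h
      simpa using h
    · intro e he
      induction e using Sym2.ind with
      | _ x y =>
        rcases x with x | x <;> rcases y with y | y <;> simp at he ⊢
    · intro p _
      simp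
  · rintro (l | l) hl
    · simp only [mem_filter, mem_univ, true_and] at hl
      exact absurd (by simp) (hl (Sum.inr ⟨0, by omega⟩))
    · simp only [mem_filter, mem_univ, true_and] at hl
      exact absurd (by simp) (hl (Sum.inl 0))

lemma mon_add {n : ℕ} (a b : Multiset (Idx n)) : mon (a + b) = mon a * mon b := by
  simp [mon]

lemma mon_cons {n : ℕ} (a : Idx n) (b : Multiset (Idx n)) : mon (a ::ₘ b) = X a * mon b := by
  simp [mon]

lemma phi_mon {n : ℕ} (hn : 2 ≤ n) (m : Multiset (Idx n)) :
    phi (K2 n) (mon m) = ∏ i : Fin 2, ∏ j : Fin n,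
      ((m.map (pr i j)).map (fun p => (X (Sum.inl s((Sum.inl i, p.1), (Sum.inr j, p.2))) :
        MvPolynomial (Sym2 ((Fin 2 ⊕ Fin n) × Bool) ⊕ ((Fin 2 ⊕ Fin n) × Bool)) ℂ))).prod := by
  induction m using Multiset.induction_on with
  | empty => simp [mon]
  | cons a m ih =>
    rw [mon_cons, map_mul, ih, phi_X n hn, ← Finset.prod_mul_distrib]
    refine Finset.prod_congr rfl fun i _ => ?_
    rw [← Finset.prod_mul_distrib]
    refine Finset.prod_congr rfl fun j _ => ?_
    simp [pr]

lemma phi_eq_of_marg {n : ℕ} (hn : 2 ≤ n) {m m' : Multiset (Idx n)} (h : Marg m m') :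
    phi (K2 n) (mon m) = phi (K2 n) (mon m') := by
  rw [phi_mon hn, phi_mon hn]
  simp only [h _ _]

lemma marg_of_phi_eq {n : ℕ} (hn : 2 ≤ n) {m m' : Multiset (Idx n)}
    (h : phi (K2 n) (mon m) = phi (K2 n) (mon m')) : Marg m m' := by
  classical
  have key : ∀ (i : Fin 2) (j : Fin n) (q : Bool × Bool) (m : Multiset (Idx n)),
      eval (fun v => if v = Sum.inl s((Sum.inl i, q.1), (Sum.inr j, q.2)) then (2 : ℂ) else 1)
        (phi (K2 n) (mon m)) = 2 ^ (m.map (pr i j)).count q := by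
    intro i j q m
    induction m using Multiset.induction_on with
    | empty => simp [mon]
    | cons a m ih =>
      rw [mon_cons, map_mul, map_mul, ih, phi_X n hn, Multiset.map_cons, Multiset.count_cons,
        pow_add, mul_comm]
      congr 1
      simp only [map_prod, eval_X]
      rw [Finset.prod_eq_single i, Finset.prod_eq_single j]
      · by_cases hq : q = pr i j a
        · subst hq; simp [pr]
        · have : ¬ (a (Sum.inl i) = q.1 ∧ a (Sum.inr j) = q.2) := by
            rintro ⟨h1, h2⟩
            exact hq (Prod.ext h1.symm h2.symm)
          simp [hq]
          tauto
      · intro b _ hb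
        simp [hb]
      · simp
      · intro b _ hb
        refine Finset.prod_eq_one fun k _ => ?_
        simp [hb]
      · simp
  intro i j
  ext q
  have h1 := key i j q m
  rw [h, key i j q m'] at h1
  have h2 : (2 : ℕ) ^ (m'.map (pr i j)).count q = 2 ^ (m.map (pr i j)).count q := by
    exact_mod_cast h1
  exact (Nat.pow_right_injective le_rfl h2).symm

lemma mon_hom {n : ℕ} (m : Multiset (Idx n)) : (mon m).IsHomogeneous m.card := by
  induction m using Multiset.induction_on with
  | empty => simpa [mon] using isHomogeneous_one _ _
  | cons a m ih =>
    rw [mon_cons, Multiset.card_cons, add_comm]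
    exact (isHomogeneous_X _ _).mul ih

lemma Marg.card {n : ℕ} (hn : 2 ≤ n) {m m' : Multiset (Idx n)} (h : Marg m m') :
    m.card = m'.card := by
  have := congrArg Multiset.card (h 0 ⟨0, by omega⟩)
  simpa using this

/-- congruence modulo the quadrics and quartics -/
def Conn {n : ℕ} (m m' : Multiset (Idx n)) : Prop :=
  Ideal.Quotient.mk (J24 n) (mon m) = Ideal.Quotient.mk (J24 n) (mon m')

lemma conn_small {n : ℕ} (hn : 2 ≤ n) {m m' : Multiset (Idx n)} (h : Marg m m')
    (hc : m.card = 2 ∨ m.card = 4) : Conn m m' := by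
  refine Ideal.Quotient.eq.2 (Ideal.subset_span ⟨?_, ?_⟩)
  · change phi (K2 n) _ = 0
    rw [map_sub, phi_eq_of_marg hn h, sub_self]
  · have h1 := mon_hom m
    have h2 := mon_hom m'
    rw [← h.card hn] at h2
    rcases hc with hc | hc <;> rw [hc] at h1 h2
    · exact Or.inl (h1.sub h2)
    · exact Or.inr (h1.sub h2)

lemma Conn.add {n : ℕ} {m m' : Multiset (Idx n)} (h : Conn m m') (r : Multiset (Idx n)) :
    Conn (m + r) (m' + r) := by
  unfold Conn at *
  rw [mon_add, mon_add, map_mul, map_mul, h]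

lemma Conn.cons {n : ℕ} {m m' : Multiset (Idx n)} (h : Conn m m') (a : Idx n) :
    Conn (a ::ₘ m) (a ::ₘ m') := by
  unfold Conn at *
  rw [mon_cons, mon_cons, map_mul, map_mul, h]

/-- connected with equal path statistics -/
def Sim {n : ℕ} (m m' : Multiset (Idx n)) : Prop :=
  Conn m m' ∧ ∀ j, m.map (tr j) = m'.map (tr j)

lemma Sim.trans {n : ℕ} {a b c : Multiset (Idx n)} (h : Sim a b) (h' : Sim b c) : Sim a c :=
  ⟨Eq.trans h.1 h'.1, fun j => (h.2 j).trans (h'.2 j)⟩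

lemma Sim.cons {n : ℕ} {m m' : Multiset (Idx n)} (h : Sim m m') (a : Idx n) :
    Sim (a ::ₘ m) (a ::ₘ m') :=
  ⟨h.1.cons a, fun j => by simp [h.2 j]⟩

lemma marg_of_tr {n : ℕ} {m m' : Multiset (Idx n)}
    (h : ∀ j, m.map (tr j) = m'.map (tr j)) : Marg m m' := by
  intro i j
  fin_cases i
  · have := congrArg (Multiset.map (fun t : Bool × Bool × Bool => (t.1, t.2.2))) (h j)
    rw [Multiset.map_map, Multiset.map_map] at this
    exact this
  · have := congrArg (Multiset.map (fun t : Bool × Bool × Bool => (t.2.1, t.2.2))) (h j)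
    rw [Multiset.map_map, Multiset.map_map] at this
    exact this

lemma extract {n : ℕ} (hn : 2 ≤ n) (x : Idx n) (m : Multiset (Idx n))
    (h : ∀ j, tr j x ∈ m.map (tr j)) : ∃ r, Sim m (x ::ₘ r) := by
  have key : ∀ T : Finset (Fin n), ∃ y r, y (Sum.inl 0) = x (Sum.inl 0) ∧
      y (Sum.inl 1) = x (Sum.inl 1) ∧ (∀ j ∈ T, y (Sum.inr j) = x (Sum.inr j)) ∧
      Sim m (y ::ₘ r) := by
    intro T
    induction T using Finset.induction_on with
    | empty =>
      obtain ⟨y, hy, hyx⟩ := Multiset.mem_map.1 (h ⟨0, by omega⟩)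
      obtain ⟨r, rfl⟩ := Multiset.exists_cons_of_mem hy
      simp only [tr, Prod.mk.injEq] at hyx
      exact ⟨y, r, hyx.1, hyx.2.1, by simp, rfl, fun _ => rfl⟩
    | insert j T hj ih =>
      obtain ⟨y, r, h0, h1, hT, hs⟩ := ih
      by_cases hyj : y (Sum.inr j) = x (Sum.inr j)
      · exact ⟨y, r, h0, h1, by simpa [hyj] using hT, hs⟩
      have hx := h j
      rw [hs.2 j, Multiset.map_cons, Multiset.mem_cons] at hx
      rcases hx with hx | hx
      · simp only [tr, Prod.mk.injEq] at hx
        exact absurd hx.2.2.symm hyj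
      obtain ⟨z, hz, hzx⟩ := Multiset.mem_map.1 hx
      obtain ⟨r, rfl⟩ := Multiset.exists_cons_of_mem hz
      simp only [tr, Prod.mk.injEq] at hzx
      obtain ⟨z0, z1, zj⟩ := hzx
      have htr : ∀ k, Multiset.map (tr k) {y, z} = Multiset.map (tr k)
          {Function.update y (Sum.inr j) (x (Sum.inr j)),
            Function.update z (Sum.inr j) (y (Sum.inr j))} := by
        intro k
        by_cases hk : k = j
        · subst hk
          simp [tr, h0, h1, z0, z1, zj]
          exact Multiset.pair_comm _ _
        · simp [tr, hk]
      refine ⟨Function.update y (Sum.inr j) (x (Sum.inr j)),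
        Function.update z (Sum.inr j) (y (Sum.inr j)) ::ₘ r, ?_, ?_, ?_, ?_⟩
      · simpa using h0
      · simpa using h1
      · intro k hk
        by_cases hkj : k = j
        · subst hkj; simp
        · have : k ∈ T := by simpa [hkj] using hk
          simpa [hkj] using hT k this
      · refine hs.trans ⟨?_, ?_⟩
        · have := (conn_small hn (marg_of_tr htr) (by simp)).add r
          simpa using this
        · intro k
          have := congrArg (· + r.map (tr k)) (htr k)
          simpa using this
  obtain ⟨y, r, h0, h1, hT, hs⟩ := key univ
  have : y = x := by
    funext v
    rcases v with i | j
    · fin_cases i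
      · exact h0
      · exact h1
    · exact hT j (mem_univ _)
  subst this
  exact ⟨r, hs⟩

lemma conn_of_tr {n : ℕ} (hn : 2 ≤ n) (m : Multiset (Idx n)) : ∀ m' : Multiset (Idx n),
    (∀ j, m.map (tr j) = m'.map (tr j)) → Conn m m' := by
  induction m using Multiset.induction_on with
  | empty =>
    intro m' h
    have h0 := h ⟨0, by omega⟩
    have : m' = 0 := by simpa using h0.symm
    subst this
    rfl
  | cons x r ih =>
    intro m' h
    obtain ⟨r', hr'⟩ := extract hn x m' (fun j => by rw [← h j]; simp)
    have : Conn r r' := ih r' fun j => by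
      have := (h j).trans (hr'.2 j)
      simpa using this
    exact (this.cons x).trans hr'.1.symm

end BinaryGraphModels
namespace BinaryGraphModels

/-- path counts -/
def ct {n : ℕ} (m : Multiset (Idx n)) (j : Fin n) (a b c : Bool) : ℕ :=
  (m.map (tr j)).count (a, b, c)

/-- slab counts -/
def sl {n : ℕ} (m : Multiset (Idx n)) (a b : Bool) : ℕ :=
  (m.map (fun I => (I (Sum.inl 0), I (Sum.inl 1)))).count (a, b)

lemma ct_cons {n : ℕ} (x : Idx n) (m : Multiset (Idx n)) (j : Fin n) (a b c : Bool) :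
    ct (x ::ₘ m) j a b c = ct m j a b c + if (a, b, c) = tr j x then 1 else 0 := by
  simp [ct, Multiset.count_cons]

lemma sl_cons {n : ℕ} (x : Idx n) (m : Multiset (Idx n)) (a b : Bool) :
    sl (x ::ₘ m) a b = sl m a b + if (a, b) = (x (Sum.inl 0), x (Sum.inl 1)) then 1 else 0 := by
  simp [sl, Multiset.count_cons]

lemma sl_eq {n : ℕ} (m : Multiset (Idx n)) (j : Fin n) (a b : Bool) :
    sl m a b = ct m j a b false + ct m j a b true := by
  induction m using Multiset.induction_on with
  | empty => simp [sl, ct]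
  | cons x m ih =>
    rw [sl_cons, ct_cons, ct_cons, ih]
    simp only [tr, Prod.mk.injEq]
    cases x (Sum.inr j) <;> simp <;> omega

lemma pr0_count {n : ℕ} (m : Multiset (Idx n)) (j : Fin n) (a c : Bool) :
    (m.map (pr 0 j)).count (a, c) = ct m j a false c + ct m j a true c := by
  induction m using Multiset.induction_on with
  | empty => simp [ct]
  | cons x m ih =>
    rw [ct_cons, ct_cons, Multiset.map_cons, Multiset.count_cons, ih]
    simp only [tr, pr, Prod.mk.injEq]
    cases x (Sum.inl 1) <;> simp <;> omega

lemma pr1_count {n : ℕ} (m : Multiset (Idx n)) (j : Fin n) (b c : Bool) :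
    (m.map (pr 1 j)).count (b, c) = ct m j false b c + ct m j true b c := by
  induction m using Multiset.induction_on with
  | empty => simp [ct]
  | cons x m ih =>
    rw [ct_cons, ct_cons, Multiset.map_cons, Multiset.count_cons, ih]
    simp only [tr, pr, Prod.mk.injEq]
    cases x (Sum.inl 0) <;> simp <;> omega

lemma Marg.eq0 {n : ℕ} {m m' : Multiset (Idx n)} (h : Marg m m') (j : Fin n) (a c : Bool) :
    ct m j a false c + ct m j a true c = ct m' j a false c + ct m' j a true c := by
  rw [← pr0_count, ← pr0_count, h 0 j]

lemma Marg.eq1 {n : ℕ} {m m' : Multiset (Idx n)} (h : Marg m m') (j : Fin n) (b c : Bool) :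
    ct m j false b c + ct m j true b c = ct m' j false b c + ct m' j true b c := by
  rw [← pr1_count, ← pr1_count, h 1 j]

lemma Marg.symm {n : ℕ} {m m' : Multiset (Idx n)} (h : Marg m m') : Marg m' m :=
  fun i j => (h i j).symm

lemma Marg.trans {n : ℕ} {a b c : Multiset (Idx n)} (h : Marg a b) (h' : Marg b c) : Marg a c :=
  fun i j => (h i j).trans (h' i j)

lemma Marg.add {n : ℕ} {m m' : Multiset (Idx n)} (h : Marg m m') (r : Multiset (Idx n)) :
    Marg (m + r) (m' + r) := fun i j => by simp [h i j]

lemma mem_of_ct {n : ℕ} {m : Multiset (Idx n)} {j : Fin n} {a b c : Bool}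
    (h : 0 < ct m j a b c) : (a, b, c) ∈ m.map (tr j) := Multiset.count_pos.1 h

/-- a string in the slab `(a, b)` -/
def mk {n : ℕ} (a b : Bool) (ε : Fin n → Bool) : Idx n := Sum.elim ![a, b] ε

lemma tr_mk {n : ℕ} (a b : Bool) (ε : Fin n → Bool) (j : Fin n) : tr j (mk a b ε) = (a, b, ε j) := by
  simp [tr, mk]

lemma stepN {n : ℕ} (hn : 2 ≤ n) {m m' : Multiset (Idx n)} (h : Marg m m')
    (hlt : sl m false false < sl m' false false) :
    ∃ m1, Conn m m1 ∧ Marg m1 m' ∧ sl m1 false false = sl m false false + 1 := by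
  let ε : Fin n → Bool := fun j => decide (ct m j false false true < ct m' j false false true)
  have hε : ∀ j, 0 < ct m j false true (ε j) ∧ 0 < ct m j true false (ε j) := by
    intro j
    have e1 := sl_eq m j false false
    have e2 := sl_eq m' j false false
    by_cases hj : ct m j false false true < ct m' j false false true
    · have : ε j = true := by simp [ε, hj]
      rw [this]
      have := h.eq0 j false true
      have := h.eq1 j false true
      omega
    · have : ε j = false := by simp [ε, hj]
      rw [this]
      have := h.eq0 j false false
      have := h.eq1 j false false
      omega
  obtain ⟨r, hr⟩ := extract hn (mk false true ε) m
    (fun j => by rw [tr_mk]; exact mem_of_ct (hε j).1)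
  obtain ⟨r', hr'⟩ := extract hn (mk true false ε) r (fun j => by
    have := mem_of_ct (hε j).2
    rw [hr.2 j, Multiset.map_cons, Multiset.mem_cons, tr_mk] at this
    rw [tr_mk]
    simpa using this)
  have hs := hr.trans (hr'.cons _)
  have hm : Marg ({mk false true ε, mk true false ε} : Multiset (Idx n))
      {mk false false ε, mk true true ε} := by
    intro i j
    fin_cases i
    · simp [pr, mk]
    · simp only [pr, mk, Fin.mk_one, Multiset.insert_eq_cons, Multiset.map_cons,
        Multiset.map_singleton, Sum.elim_inl, Sum.elim_inr]
      exact Multiset.pair_comm _ _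
  have e : ∀ x y : Idx n, x ::ₘ y ::ₘ r' = {x, y} + r' := by intro x y; simp
  have hm0 := marg_of_tr hs.2
  refine ⟨mk false false ε ::ₘ mk true true ε ::ₘ r', ?_, ?_, ?_⟩
  · refine hs.1.trans ?_
    rw [e, e]
    exact (conn_small hn hm (by simp)).add r'
  · refine Marg.trans ?_ h
    refine Marg.trans ?_ hm0.symm
    rw [e, e]
    exact hm.symm.add r'
  · have : sl m false false = sl (mk false true ε ::ₘ mk true false ε ::ₘ r') false false := by
      rw [sl_eq _ ⟨0, by omega⟩, sl_eq _ ⟨0, by omega⟩, ct, ct, ct, ct, hs.2]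
    rw [this]
    simp [sl_cons, mk]

/-- flip one coordinate -/
def fl {n : ℕ} (j : Fin n) (I : Idx n) : Idx n :=
  Function.update I (Sum.inr j) (!I (Sum.inr j))

lemma tr_fl_self {n : ℕ} (j : Fin n) (I : Idx n) :
    tr j (fl j I) = ((tr j I).1, (tr j I).2.1, !(tr j I).2.2) := by
  simp [tr, fl]

lemma tr_fl_ne {n : ℕ} {j k : Fin n} (h : k ≠ j) (I : Idx n) : tr k (fl j I) = tr k I := by
  simp [tr, fl, h]

lemma pr0_tr {n : ℕ} (k : Fin n) (I : Idx n) : pr 0 k I = ((tr k I).1, (tr k I).2.2) := rfl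

lemma pr1_tr {n : ℕ} (k : Fin n) (I : Idx n) : pr 1 k I = ((tr k I).2.1, (tr k I).2.2) := rfl

lemma stepX {n : ℕ} (hn : 2 ≤ n) {m m' : Multiset (Idx n)} (h : Marg m m')
    (heq : sl m false false = sl m' false false) (j : Fin n)
    (hlt : ct m j false false true < ct m' j false false true) :
    ∃ m1, Conn m m1 ∧ Marg m1 m' ∧ sl m1 false false = sl m' false false ∧
      ct m1 j false false true = ct m j false false true + 1 ∧
      ∀ k ≠ j, ct m1 k false false true = ct m k false false true := by
  have e1 := sl_eq m j false false
  have e2 := sl_eq m' j false false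
  have f1 := h.eq0 j false true
  have f2 := h.eq1 j false true
  have f3 := h.eq0 j false false
  have f4 := h.eq1 j false false
  have f5 := h.eq0 j true false
  obtain ⟨A, hA, hA'⟩ := Multiset.mem_map.1 (mem_of_ct (m := m) (j := j) (a := false) (b := false)
    (c := false) (by omega))
  obtain ⟨B, hB, hB'⟩ := Multiset.mem_map.1 (mem_of_ct (m := m) (j := j) (a := true) (b := true)
    (c := false) (by omega))
  obtain ⟨C, hC, hC'⟩ := Multiset.mem_map.1 (mem_of_ct (m := m) (j := j) (a := false) (b := true)
    (c := true) (by omega))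
  obtain ⟨D, hD, hD'⟩ := Multiset.mem_map.1 (mem_of_ct (m := m) (j := j) (a := true) (b := false)
    (c := true) (by omega))
  have nAB : B ≠ A := by rintro rfl; simp [hA'] at hB'
  have nAC : C ≠ A := by rintro rfl; simp [hA'] at hC'
  have nAD : D ≠ A := by rintro rfl; simp [hA'] at hD'
  have nBC : C ≠ B := by rintro rfl; simp [hB'] at hC'
  have nBD : D ≠ B := by rintro rfl; simp [hB'] at hD'
  have nCD : D ≠ C := by rintro rfl; simp [hC'] at hD'
  obtain ⟨m, rfl⟩ := Multiset.exists_cons_of_mem hA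
  simp only [Multiset.mem_cons, nAB, nAC, nAD, false_or] at hB hC hD
  obtain ⟨m, rfl⟩ := Multiset.exists_cons_of_mem hB
  simp only [Multiset.mem_cons, nBC, nBD, false_or] at hC hD
  obtain ⟨m, rfl⟩ := Multiset.exists_cons_of_mem hC
  simp only [Multiset.mem_cons, nCD, false_or] at hD
  obtain ⟨m, rfl⟩ := Multiset.exists_cons_of_mem hD
  have hm : Marg ({A, B, C, D} : Multiset (Idx n)) {fl j A, fl j B, fl j C, fl j D} := by
    intro i k
    by_cases hk : k = j
    · subst hk
      fin_cases i
      · simp only [Fin.zero_eta, Multiset.insert_eq_cons, Multiset.map_cons, Multiset.map_singleton,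
          pr0_tr, tr_fl_self, hA', hB', hC', hD']
        decide
      · simp only [Fin.mk_one, Multiset.insert_eq_cons, Multiset.map_cons, Multiset.map_singleton,
          pr1_tr, tr_fl_self, hA', hB', hC', hD']
        decide
    · fin_cases i
      · simp [pr0_tr, tr_fl_ne hk]
      · simp [pr1_tr, tr_fl_ne hk]
  have e : ∀ x y z w : Idx n, x ::ₘ y ::ₘ z ::ₘ w ::ₘ m = {x, y, z, w} + m := by
    intro x y z w; simp
  refine ⟨fl j A ::ₘ fl j B ::ₘ fl j C ::ₘ fl j D ::ₘ m, ?_, ?_, ?_, ?_, ?_⟩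
  · rw [e, e]
    exact (conn_small hn hm (by simp)).add m
  · refine Marg.trans ?_ h
    rw [e, e]
    exact hm.symm.add m
  · rw [← heq, sl_eq _ j, sl_eq _ j]
    simp [ct_cons, tr_fl_self, hA', hB', hC', hD']
    omega
  · simp [ct_cons, tr_fl_self, hA', hB', hC', hD']
  · intro k hk
    simp [ct_cons, tr_fl_ne hk]

lemma conn_eqN {n : ℕ} (hn : 2 ≤ n) (d : ℕ) : ∀ m m' : Multiset (Idx n), Marg m m' →
    sl m false false = sl m' false false →
    (∑ j, ((ct m j false false true - ct m' j false false true) +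
      (ct m' j false false true - ct m j false false true))) = d → Conn m m' := by
  induction d using Nat.strong_induction_on with
  | _ d ih =>
    intro m m' h hN hd
    by_cases hall : ∀ j, ct m j false false true = ct m' j false false true
    · refine conn_of_tr hn m m' fun j => ?_
      have e0 := hall j
      have e1 := sl_eq m j false false
      have e2 := sl_eq m' j false false
      have f1 := h.eq0 j false true
      have f2 := h.eq1 j false true
      have f3 := h.eq0 j false false
      have f4 := h.eq1 j false false
      have f5 := h.eq0 j true false
      have f6 := h.eq0 j true true
      ext ⟨a, b, c⟩
      change ct m j a b c = ct m' j a b c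
      cases a <;> cases b <;> cases c <;> omega
    · push Not at hall
      obtain ⟨j, hj⟩ := hall
      rcases lt_or_gt_of_ne hj with hj | hj
      · obtain ⟨m1, h1, h2, h3, h4, h5⟩ := stepX hn h hN j hj
        refine Eq.trans h1 (ih _ ?_ m1 m' h2 h3 rfl)
        rw [← hd]
        refine Finset.sum_lt_sum (fun k _ => ?_) ⟨j, mem_univ _, by omega⟩
        by_cases hk : k = j
        · subst hk; omega
        · rw [h5 k hk]
      · obtain ⟨m1, h1, h2, h3, h4, h5⟩ := stepX hn h.symm hN.symm j hj
        refine Eq.trans (ih _ ?_ m m1 h2.symm h3.symm rfl) (Eq.symm h1)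
        rw [← hd]
        refine Finset.sum_lt_sum (fun k _ => ?_) ⟨j, mem_univ _, by omega⟩
        by_cases hk : k = j
        · subst hk; omega
        · rw [h5 k hk]

lemma conn_of_marg {n : ℕ} (hn : 2 ≤ n) (d : ℕ) : ∀ m m' : Multiset (Idx n), Marg m m' →
    (sl m false false - sl m' false false) + (sl m' false false - sl m false false) = d →
    Conn m m' := by
  induction d with
  | zero =>
    intro m m' h hd
    exact conn_eqN hn _ m m' h (by omega) rfl
  | succ d ih =>
    intro m m' h hd
    rcases lt_or_ge (sl m false false) (sl m' false false) with hlt | hge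
    · obtain ⟨m1, h1, h2, h3⟩ := stepN hn h hlt
      exact Eq.trans h1 (ih m1 m' h2 (by omega))
    · obtain ⟨m1, h1, h2, h3⟩ := stepN hn h.symm (by omega)
      exact Eq.trans (ih m m1 h2.symm (by omega)) (Eq.symm h1)

end BinaryGraphModels
namespace BinaryGraphModels

lemma mon_eq {n : ℕ} (m : Multiset (Idx n)) : mon m = monomial (Multiset.toFinsupp m) 1 := by
  induction m using Multiset.induction_on with
  | empty => simp [mon]
  | cons x m ih =>
    rw [mon_cons, ih, ← Multiset.singleton_add, map_add, Multiset.toFinsupp_singleton, X,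
      monomial_mul, one_mul]

lemma exists_exp {n : ℕ} (hn : 2 ≤ n) (m : Multiset (Idx n)) :
    ∃ β, phi (K2 n) (mon m) = monomial β 1 := by
  induction m using Multiset.induction_on with
  | empty => exact ⟨0, by simp [mon]⟩
  | cons x m ih =>
    obtain ⟨β, hβ⟩ := ih
    refine ⟨(∑ i : Fin 2, ∑ j : Fin n, Finsupp.single
      (Sum.inl s((Sum.inl i, x (Sum.inl i)), (Sum.inr j, x (Sum.inr j)))) 1) + β, ?_⟩
    rw [mon_cons, map_mul, hβ, phi_X n hn, ← one_mul (1 : ℂ), ← monomial_mul, one_mul]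
    simp only [monomial_sum_one]
    rfl

/-- exponent of the image of a monomial -/
noncomputable def ex {n : ℕ} (hn : 2 ≤ n) (m : Multiset (Idx n)) :=
  (exists_exp hn m).choose

lemma phi_ex {n : ℕ} (hn : 2 ≤ n) (m : Multiset (Idx n)) :
    phi (K2 n) (mon m) = monomial (ex hn m) 1 := (exists_exp hn m).choose_spec

lemma marg_iff {n : ℕ} (hn : 2 ≤ n) (m m' : Multiset (Idx n)) :
    Marg m m' ↔ ex hn m = ex hn m' := by
  constructor
  · intro h
    have := phi_eq_of_marg hn h
    rw [phi_ex hn, phi_ex hn] at this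
    exact monomial_left_injective one_ne_zero this
  · intro h
    apply marg_of_phi_eq hn
    rw [phi_ex hn, phi_ex hn, h]

lemma monomial_mon {n : ℕ} (a : Idx n →₀ ℕ) (c : ℂ) :
    monomial a c = c • mon (Finsupp.toMultiset a) := by
  rw [mon_eq, smul_monomial, smul_eq_mul, mul_one]
  simp

lemma toric_le {n : ℕ} (hn : 2 ≤ n) : toricIdeal (K2 n) ≤ J24 n := by
  classical
  let S : _ → MvPolynomial (Idx n) ℂ := fun β =>
    if h : ∃ m, ex hn m = β then mon h.choose else 0
  let L := (basisMonomials (Sym2 ((Fin 2 ⊕ Fin n) × Bool) ⊕ ((Fin 2 ⊕ Fin n) × Bool)) ℂ).constr ℂ S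
  have key : ∀ f : MvPolynomial (Idx n) ℂ, f - L (phi (K2 n) f) ∈ J24 n := by
    intro f
    induction f using MvPolynomial.induction_on' with
    | monomial a c =>
      rw [monomial_mon, map_smul, map_smul, ← smul_sub]
      refine Submodule.smul_of_tower_mem _ c ?_
      generalize Finsupp.toMultiset a = m
      have hL : L (monomial (ex hn m) 1) = S (ex hn m) := by
        have := (basisMonomials (Sym2 ((Fin 2 ⊕ Fin n) × Bool) ⊕
          ((Fin 2 ⊕ Fin n) × Bool)) ℂ).constr_basis ℂ S (ex hn m)
        simpa [L] using this
      rw [phi_ex hn, hL]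
      have hex : ∃ m', ex hn m' = ex hn m := ⟨m, rfl⟩
      have hS : S (ex hn m) = mon hex.choose := dif_pos hex
      rw [hS]
      refine Ideal.Quotient.eq.1 (conn_of_marg hn _ m _ ?_ rfl)
      exact ((marg_iff hn _ _).2 hex.choose_spec).symm
    | add p q hp hq =>
      rw [map_add, map_add, add_sub_add_comm]
      exact add_mem hp hq
  intro f hf
  have h0 : phi (K2 n) f = 0 := hf
  have := key f
  rwa [h0, map_zero, sub_zero] at this

lemma toric_eq {n : ℕ} (hn : 2 ≤ n) : toricIdeal (K2 n) = J24 n :=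
  le_antisymm (toric_le hn) (Ideal.span_le.2 fun _ hf => hf.1)

lemma coeff_toric {n : ℕ} (hn : 2 ≤ n) (m0 : Multiset (Idx n)) (h : ∀ m, Marg m m0 → m = m0)
    (f : MvPolynomial (Idx n) ℂ) (hf : f ∈ toricIdeal (K2 n)) :
    coeff (Multiset.toFinsupp m0) f = 0 := by
  classical
  have key : ∀ f : MvPolynomial (Idx n) ℂ,
      coeff (ex hn m0) (phi (K2 n) f) = coeff (Multiset.toFinsupp m0) f := by
    intro f
    induction f using MvPolynomial.induction_on' with
    | monomial a c =>
      rw [monomial_mon, map_smul, coeff_smul, coeff_smul]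
      generalize Finsupp.toMultiset a = m
      rw [phi_ex hn, mon_eq, coeff_monomial, coeff_monomial]
      by_cases hm : m = m0
      · subst hm; simp
      · rw [if_neg, if_neg]
        · exact fun hh => hm (Multiset.toFinsupp.injective hh)
        · exact fun hh => hm (h m ((marg_iff hn _ _).2 hh))
    | add p q hp hq => rw [map_add, coeff_add, coeff_add, hp, hq]
  have h0 : phi (K2 n) f = 0 := hf
  rw [← key, h0, coeff_zero]

/-- strings supported on the first two vertices -/
def w2 {n : ℕ} (α β : Bool) (j : Fin n) : Bool :=
  if j.val = 0 then α else if j.val = 1 then β else false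

/-- the first monomial of the indispensable quartic -/
def Q (n : ℕ) (α : Bool) : Multiset (Idx n) :=
  {mk false false (w2 α false), mk true true (w2 α true), mk false true (w2 (!α) false),
    mk true false (w2 (!α) true)}

lemma Q_marg (n : ℕ) : Marg (Q n false) (Q n true) := by
  intro i j
  fin_cases i <;> simp [Q, pr, mk, w2] <;>
    generalize decide (j.val = 0) = p <;> generalize decide (j.val = 1) = q <;>
    revert p q <;> decide

lemma dec0 : ∀ a b c d : Bool, ({(false, a), (true, b), (false, c), (true, d)} :
      Multiset (Bool × Bool)) = {(false, false), (true, false), (false, true), (true, true)} →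
    ({(false, a), (true, b), (true, c), (false, d)} :
      Multiset (Bool × Bool)) = {(false, false), (true, false), (true, true), (false, true)} →
    (a = false ∧ b = false ∧ c = true ∧ d = true) ∨
      (a = true ∧ b = true ∧ c = false ∧ d = false) := by decide

lemma dec1 : ∀ a b c d : Bool, ({(false, a), (true, b), (false, c), (true, d)} :
      Multiset (Bool × Bool)) = {(false, false), (true, true), (false, false), (true, true)} →
    (a = false ∧ b = true ∧ c = false ∧ d = true) := by decide

lemma dec2 : ∀ a b c d : Bool, ({(false, a), (true, b), (false, c), (true, d)} :
      Multiset (Bool × Bool)) = {(false, false), (true, false), (false, false), (true, false)} →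
    (a = false ∧ b = false ∧ c = false ∧ d = false) := by decide

lemma exists_slab {n : ℕ} {m : Multiset (Idx n)} {a b : Bool} (h : 0 < sl m a b) :
    ∃ ε, mk a b ε ∈ m := by
  obtain ⟨I, hI, hI'⟩ := Multiset.mem_map.1 (Multiset.count_pos.1 h)
  refine ⟨fun j => I (Sum.inr j), ?_⟩
  convert hI
  simp only [Prod.mk.injEq] at hI'
  funext v
  rcases v with i | j
  · fin_cases i
    · simp [mk, hI'.1]
    · simp [mk, hI'.2]
  · rfl

lemma mk_ne {n : ℕ} {a b a' b' : Bool} {ε ε' : Fin n → Bool} (h : (a, b) ≠ (a', b')) :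
    mk a b ε ≠ mk a' b' ε' := by
  intro he
  apply h
  have h0 := congrFun he (Sum.inl 0)
  have h1 := congrFun he (Sum.inl 1)
  simp only [mk, Sum.elim_inl, Matrix.cons_val_zero, Matrix.cons_val_one] at h0 h1
  rw [h0, h1]

lemma Q_fiber {n : ℕ} (hn : 2 ≤ n) (m : Multiset (Idx n)) (h : Marg m (Q n false)) :
    m = Q n false ∨ m = Q n true := by
  have hcard : m.card = 4 := by rw [h.card hn]; simp [Q]
  let j1 : Fin n := ⟨1, by omega⟩
  have hct : ∀ a b c, ct (Q n false) j1 a b c = if a = c then 1 else 0 := by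
    intro a b c
    cases a <;> cases b <;> cases c <;> simp [ct, Q, tr_mk, w2, j1]
  have f := fun a c => h.eq0 j1 a c
  have g := fun a c => h.eq1 j1 a c
  simp only [hct] at f g
  have f1 := f false false
  have f2 := f false true
  have f3 := f true false
  have f4 := f true true
  have g1 := g false false
  have g2 := g false true
  have g3 := g true false
  have g4 := g true true
  simp only [reduceCtorEq, if_true, if_false] at f1 f2 f3 f4 g1 g2 g3 g4
  obtain ⟨α, hA⟩ := exists_slab (m := m) (a := false) (b := false) (by rw [sl_eq m j1]; omega)
  obtain ⟨β, hB⟩ := exists_slab (m := m) (a := true) (b := true) (by rw [sl_eq m j1]; omega)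
  obtain ⟨γ, hC⟩ := exists_slab (m := m) (a := false) (b := true) (by rw [sl_eq m j1]; omega)
  obtain ⟨δ, hD⟩ := exists_slab (m := m) (a := true) (b := false) (by rw [sl_eq m j1]; omega)
  clear f g f1 f2 f3 f4 g1 g2 g3 g4 hct
  obtain ⟨m, rfl⟩ := Multiset.exists_cons_of_mem hA
  replace hB := (Multiset.mem_cons.1 hB).resolve_left (mk_ne (by decide))
  replace hC := (Multiset.mem_cons.1 hC).resolve_left (mk_ne (by decide))
  replace hD := (Multiset.mem_cons.1 hD).resolve_left (mk_ne (by decide))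
  obtain ⟨m, rfl⟩ := Multiset.exists_cons_of_mem hB
  replace hC := (Multiset.mem_cons.1 hC).resolve_left (mk_ne (by decide))
  replace hD := (Multiset.mem_cons.1 hD).resolve_left (mk_ne (by decide))
  obtain ⟨m, rfl⟩ := Multiset.exists_cons_of_mem hC
  replace hD := (Multiset.mem_cons.1 hD).resolve_left (mk_ne (by decide))
  obtain ⟨m, rfl⟩ := Multiset.exists_cons_of_mem hD
  have hm : m = 0 := by
    simp only [Multiset.card_cons] at hcard
    exact Multiset.card_eq_zero.1 (by omega)
  subst hm
  have h0 := h 0 ⟨0, by omega⟩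
  have h0' := h 1 ⟨0, by omega⟩
  have h1 := h 0 j1
  simp only [Q, pr, mk, w2, j1, Multiset.insert_eq_cons, Multiset.map_cons, Multiset.map_zero,
    Multiset.map_singleton, Sum.elim_inl, Sum.elim_inr, Matrix.cons_val_zero, Matrix.cons_val_one,
    if_true, Bool.not_false, one_ne_zero, if_false] at h0 h0' h1
  obtain ⟨b1, b2, b3, b4⟩ := dec1 _ _ _ _ h1
  have h2 : ∀ j : Fin n, j.val ≠ 0 → j.val ≠ 1 →
      α j = false ∧ β j = false ∧ γ j = false ∧ δ j = false := by
    intro j hj0 hj1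
    have h1 := h 0 j
    simp only [Q, pr, mk, w2, Multiset.insert_eq_cons, Multiset.map_cons, Multiset.map_zero,
      Multiset.map_singleton, Sum.elim_inl, Sum.elim_inr, Matrix.cons_val_zero,
      hj0, hj1, if_false] at h1
    exact dec2 _ _ _ _ h1
  have fin : ∀ (x y : Bool) (ε : Fin n → Bool), ε ⟨0, by omega⟩ = x → ε ⟨1, by omega⟩ = y →
      (∀ j : Fin n, j.val ≠ 0 → j.val ≠ 1 → ε j = false) → ε = w2 x y := by
    intro x y ε hx hy hz
    funext j
    unfold w2
    split_ifs with h1 h2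
    · rw [← hx]; congr 1; exact Fin.ext h1
    · rw [← hy]; congr 1; exact Fin.ext h2
    · exact hz j h1 h2
  have fα := fun x hx => fin x _ α hx b1 (fun j p q => (h2 j p q).1)
  have fβ := fun x hx => fin x _ β hx b2 (fun j p q => (h2 j p q).2.1)
  have fγ := fun x hx => fin x _ γ hx b3 (fun j p q => (h2 j p q).2.2.1)
  have fδ := fun x hx => fin x _ δ hx b4 (fun j p q => (h2 j p q).2.2.2)
  rcases dec0 _ _ _ _ h0 h0' with ⟨a1, a2, a3, a4⟩ | ⟨a1, a2, a3, a4⟩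
  · left
    rw [fα _ a1, fβ _ a2, fγ _ a3, fδ _ a4]; rfl
  · right
    rw [fα _ a1, fβ _ a2, fγ _ a3, fδ _ a4]; rfl

lemma Q_disjoint {n : ℕ} (hn : 2 ≤ n) {x : Idx n} (h1 : x ∈ Q n false) (h2 : x ∈ Q n true) :
    False := by
  have p : ∀ α, x ∈ Q n α → x (Sum.inr ⟨0, by omega⟩) =
      xor α (xor (x (Sum.inl 0)) (x (Sum.inl 1))) := by
    intro α h
    simp only [Q, Multiset.insert_eq_cons, Multiset.mem_cons, Multiset.mem_singleton] at h
    rcases h with rfl | rfl | rfl | rfl <;> simp [mk, w2]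
  have a := p _ h1
  have b := p _ h2
  rw [a] at b
  simp at b

lemma not_gen {n : ℕ} (hn : 2 ≤ n) : ¬ GenInDegLE (K2 n) 3 := by
  classical
  intro hG
  have hmem : mon (Q n false) - mon (Q n true) ∈ toricIdeal (K2 n) := by
    change phi (K2 n) _ = 0
    rw [map_sub, phi_eq_of_marg hn (Q_marg n), sub_self]
  rw [hG] at hmem
  have key : ∀ a : Multiset (Idx n), a ≤ Q n false →
      coeff (Multiset.toFinsupp a) (mon (Q n false) - mon (Q n true)) = 0 := by
    refine Submodule.span_induction (p := fun f _ => ∀ a : Multiset (Idx n), a ≤ Q n false →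
      coeff (Multiset.toFinsupp a) f = 0) ?_ ?_ ?_ ?_ hmem
    · rintro f ⟨hf, hd⟩ a ha
      obtain ⟨b, hb⟩ := Multiset.le_iff_exists_add.1 ha
      by_cases hb0 : b = 0
      · subst hb0
        apply coeff_eq_zero_of_totalDegree_lt
        refine lt_of_le_of_lt hd ?_
        have : (Multiset.toFinsupp a).degree = a.card := by
          have := Finsupp.card_toMultiset (Multiset.toFinsupp a)
          rw [Multiset.toFinsupp_toMultiset] at this
          rw [this]; rfl
        change 3 < (Multiset.toFinsupp a).degree
        rw [this]
        rw [add_zero] at hb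
        rw [← hb]; simp [Q]
      · refine coeff_toric hn a (fun m hm => ?_) f hf
        have := hm.add b
        rw [← hb] at this
        rcases Q_fiber hn _ this with h | h
        · rw [hb] at h
          exact add_right_cancel h
        · exfalso
          obtain ⟨x, hx⟩ := Multiset.exists_mem_of_ne_zero hb0
          refine Q_disjoint hn (x := x) ?_ ?_
          · rw [hb]; exact Multiset.mem_add.2 (Or.inr hx)
          · rw [← h]; exact Multiset.mem_add.2 (Or.inr hx)
    · simp
    · intro f g _ _ hf hg a ha
      rw [coeff_add, hf a ha, hg a ha, add_zero]
    · intro g f _ hf a ha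
      rw [smul_eq_mul, coeff_mul]
      refine Finset.sum_eq_zero fun p hp => ?_
      have hp' := HasAntidiagonal.mem_antidiagonal.1 hp
      have : coeff p.2 f = 0 := by
        have := hf (Finsupp.toMultiset p.2) (le_trans ?_ ha)
        · simpa using this
        · have h2 := congrArg Finsupp.toMultiset hp'
          rw [map_add, Multiset.toFinsupp_toMultiset] at h2
          rw [← h2]
          exact Multiset.le_add_left _ _
      rw [this, mul_zero]
  have h1 := key _ le_rfl
  rw [coeff_sub, mon_eq, mon_eq, coeff_monomial, coeff_monomial, if_pos rfl, if_neg] at h1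
  · simp at h1
  · intro he
    have he' := Multiset.toFinsupp.injective he
    have hx : mk false false (w2 false false) ∈ Q n false := by simp [Q]
    exact Q_disjoint hn hx (he' ▸ hx)

lemma gen_of {n : ℕ} {d : ℕ} (h : J24 n ≤ Ideal.span {f : MvPolynomial (Idx n) ℂ |
    f ∈ toricIdeal (K2 n) ∧ f.totalDegree ≤ d}) (hn : 2 ≤ n) : GenInDegLE (K2 n) d :=
  le_antisymm ((toric_le hn).trans h) (Ideal.span_le.2 fun _ hf => hf.1)

lemma gen4 {n : ℕ} (hn : 2 ≤ n) : GenInDegLE (K2 n) 4 := by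
  refine gen_of (Ideal.span_mono ?_) hn
  rintro f ⟨hf, h | h⟩
  · exact ⟨hf, h.totalDegree_le.trans (by norm_num)⟩
  · exact ⟨hf, h.totalDegree_le⟩

/-- for `n ≥ 2`, the toric ideal of the complete bipartite graph `K_{2,n}` is
generated by its homogeneous elements of degrees 2 and 4, it is not generated in degree `≤ 3`,
and hence `μ(K_{2,n}) = 4`. -/
theorem completeBipartite_two_markovWidth (n : ℕ) (hn : 2 ≤ n) :
    toricIdeal (completeBipartiteGraph (Fin 2) (Fin n)) =
      Ideal.span {f : MvPolynomial ((Fin 2 ⊕ Fin n) → Bool) ℂ |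
        f ∈ toricIdeal (completeBipartiteGraph (Fin 2) (Fin n)) ∧
          (f.IsHomogeneous 2 ∨ f.IsHomogeneous 4)} ∧
    ¬ GenInDegLE (completeBipartiteGraph (Fin 2) (Fin n)) 3 ∧
    markovWidth (completeBipartiteGraph (Fin 2) (Fin n)) = 4 := by
  refine ⟨toric_eq hn, not_gen hn, le_antisymm (Nat.sInf_le (gen4 hn)) ?_⟩
  refine le_csInf ⟨4, gen4 hn⟩ fun d hd => ?_
  by_contra hlt
  push Not at hlt
  refine not_gen hn (le_antisymm ?_ (Ideal.span_le.2 fun _ hf => hf.1))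
  have hd' : GenInDegLE (K2 n) d := hd
  unfold GenInDegLE at hd'
  conv_lhs => rw [hd']
  exact Ideal.span_mono fun f hf => ⟨hf.1, hf.2.trans (by omega)⟩

end BinaryGraphModels
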